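/- arXiv:1207.6732 — 9 statements merged into one kernel-verified Lean document; each statement's English description precedes it below -/
import Mathlib

section
/- Let P, N, β, α, x be real numbers with N ≥ 1, β ≥ 1, P = β·N, α ≥ 2 and 0 ≤ x < 1. Let u, v be distinct points of the Euclidean plane ℝ², and let T be a finite set of points of ℝ² with v ∈ T and u ∉ T. If the interference at u satisfies ∑_{w ∈ T, w ≠ v} P·dist(w,u)^{−α} ≤ N·α·x, and dist(v,u) ≤ 1 − x, then SINR(v,u,T) ≥ β, i.e. P·dist(v,u)^{−α} / (N + ∑_{w ∈ T, w ≠ v} P·dist(w,u)^{−α}) ≥ β. (Fact 1: if the interference at the receiver is at most N·α·x, then it hears a transmitter from distance 1 − x.) -/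
/-!
Since `dist v u ≤ 1 - x` gives `1 + x ≤ (dist v u)⁻¹`, Bernoulli's inequality yields
`1 + α x ≤ (1 + x) ^ α ≤ dist v u ^ (-α)`. Multiplying by `P = β N`, the received signal is at least
`β (N + N α x)`, which is at least `β` times noise plus interference.
-/

open scoped Classical

/-- Fact 1: if the interference at the receiver `u` is at most `N·α·x`, then it hears a
transmitter `v` from distance `1 − x`, i.e. `SINR(v,u,T) ≥ β`. -/
theorem fact1_sinr
    (P N β α x : ℝ) (hN : 1 ≤ N) (hβ : 1 ≤ β) (hP : P = β * N) (hα : 2 ≤ α)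
    (hx0 : 0 ≤ x) (hx1 : x < 1)
    (u v : EuclideanSpace ℝ (Fin 2)) (huv : u ≠ v)
    (T : Finset (EuclideanSpace ℝ (Fin 2))) (hvT : v ∈ T) (huT : u ∉ T)
    (hInt : ∑ w ∈ T.erase v, P * dist w u ^ (-α) ≤ N * α * x)
    (hdist : dist v u ≤ 1 - x) :
    P * dist v u ^ (-α) / (N + ∑ w ∈ T.erase v, P * dist w u ^ (-α)) ≥ β := by
  have hd : 0 < dist v u := dist_pos.mpr huv.symm
  have hinv : 1 + x ≤ (dist v u)⁻¹ := by
    rw [le_inv_comm₀ (by linarith) hd]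
    refine hdist.trans ?_
    rw [← one_div, le_div_iff₀ (by linarith)]
    nlinarith [sq_nonneg x]
  have hsig : 1 + α * x ≤ dist v u ^ (-α) := by
    rw [Real.rpow_neg hd.le, ← Real.inv_rpow hd.le]
    exact (one_add_mul_self_le_rpow_one_add (by linarith) (by linarith)).trans
      (Real.rpow_le_rpow (by linarith) hinv (by linarith))
  have hS : 0 ≤ ∑ w ∈ T.erase v, P * dist w u ^ (-α) := by
    have hP0 : 0 ≤ P := by rw [hP]; positivity
    exact Finset.sum_nonneg fun w _ => by positivity
  rw [ge_iff_le, le_div_iff₀ (by linarith)]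
  calc β * (N + ∑ w ∈ T.erase v, P * dist w u ^ (-α))
      ≤ β * (N + N * α * x) := by gcongr
    _ = P * (1 + α * x) := by rw [hP]; ring
    _ ≤ P * dist v u ^ (-α) := by
      have hP0 : 0 ≤ P := by rw [hP]; positivity
      gcongr
end

section
/- Let α > 2 and t ≥ 2 be real numbers, let P > 0 be real, and let m be a natural number. Then ∑_{k=1}^{m} 8·k·P/(k·t − 1)^α ≤ (8·P/t^α)·(2^α + 2^{α−2}·(1/(α−2) + 1/(α−1))). (This is the key summation estimate in the proof of Lemma 2, bounding the total interference received from transmitters placed one per box in a d-diluted grid, where the k-th concentric grid ring contains at most 8k boxes whose points are at distance at least k·t − 1 ≥ (k − 1/2)·t from the receiver.) -/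
/-!
Since `t ≥ 2`, the distance satisfies `k * t - 1 ≥ (k - 1/2) * t`, so after factoring out
`8 * P / t ^ α` it suffices to bound `∑ k * (k - 1/2) ^ (-α)`. The term `k = 1` equals `2 ^ α`.
With `u = k - 1/2`, every later term is `u ^ (1 - α) + u ^ (-α) / 2`, a decreasing function of `u`,
hence at most its integral over `[u - 1, u]`. These integrals are differences of the explicit tail
`interferenceTail α`, so the sum telescopes, and `interferenceTail α (1/2)` is exactly
`2 ^ (α - 2) * (1 / (α - 2) + 1 / (α - 1))`. The integral comparison is `rpow_le_sub_div`, which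
follows from `log x ≤ x - 1` and `x + 1 ≤ exp x`.
-/

/-- The closed form of `∫ x in (u, ∞), (x ^ (1 - α) + x ^ (-α) / 2)` for `α > 2` and `u > 0`. -/
noncomputable def interferenceTail (α u : ℝ) : ℝ :=
  u ^ (-(α - 2)) / (α - 2) + u ^ (-(α - 1)) / (α - 1) / 2

/-- The value of the decreasing function `x ^ (-b - 1)` at the right end of `[u - 1, u]` is at most
its integral over that interval. -/
lemma rpow_le_sub_div (b u : ℝ) (hb : 0 < b) (hu : 1 < u) :
    u ^ (-b - 1) ≤ (u - 1) ^ (-b) / b - u ^ (-b) / b := by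
  have hu0 : 0 < u := by linarith
  have hv : 0 < (u - 1) / u := div_pos (by linarith) hu0
  have hlog : Real.log ((u - 1) / u) ≤ -(1 / u) := by
    have h := Real.log_le_sub_one_of_pos hv
    have e : (u - 1) / u - 1 = -(1 / u) := by field_simp; ring
    linarith
  have bern : 1 + b / u ≤ ((u - 1) / u) ^ (-b) := by
    rw [Real.rpow_def_of_pos hv]
    have h1 := Real.add_one_le_exp (Real.log ((u - 1) / u) * -b)
    have h2 : b * Real.log ((u - 1) / u) ≤ b * -(1 / u) := mul_le_mul_of_nonneg_left hlog hb.le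
    have e : b * -(1 / u) = -(b / u) := by ring
    linarith
  rw [Real.div_rpow (by linarith) hu0.le, le_div_iff₀ (Real.rpow_pos_of_pos hu0 _)] at bern
  rw [Real.rpow_sub_one hu0.ne', ← sub_div, le_div_iff₀ hb]
  have e : (1 + b / u) * u ^ (-b) = u ^ (-b) + u ^ (-b) / u * b := by ring
  linarith

lemma mul_rpow_le_interferenceTail_sub (α u : ℝ) (hα : 2 < α) (hu : 1 < u) :
    (u + 1 / 2) * u ^ (-α) ≤ interferenceTail α (u - 1) - interferenceTail α u := by
  have h1 := rpow_le_sub_div (α - 2) u (by linarith) hu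
  have h2 := rpow_le_sub_div (α - 1) u (by linarith) hu
  have e1 : u ^ (-(α - 2) - 1) = u * u ^ (-α) := by
    rw [show -(α - 2) - 1 = -α + 1 by ring, Real.rpow_add_one (by linarith), mul_comm]
  have e2 : u ^ (-(α - 1) - 1) = u ^ (-α) := by
    congr 1; ring
  rw [e1] at h1
  rw [e2] at h2
  unfold interferenceTail
  linarith

lemma interferenceTail_nonneg (α u : ℝ) (hα : 2 < α) (hu : 0 < u) : 0 ≤ interferenceTail α u := by
  have h1 : 0 < α - 2 := by linarith
  have h2 : 0 < α - 1 := by linarith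
  unfold interferenceTail
  positivity

lemma interferenceTail_half (α : ℝ) :
    interferenceTail α (1 / 2) = 2 ^ (α - 2) * (1 / (α - 2) + 1 / (α - 1)) := by
  unfold interferenceTail
  rw [one_div, Real.inv_rpow (by norm_num), Real.inv_rpow (by norm_num),
    Real.rpow_neg (by norm_num), Real.rpow_neg (by norm_num), inv_inv, inv_inv,
    show α - 1 = α - 2 + 1 by ring, Real.rpow_add_one (by norm_num)]
  ring

lemma sum_mul_rpow_le (α : ℝ) (hα : 2 < α) (n : ℕ) :
    ∑ k ∈ Finset.Icc 1 (n + 1), (k : ℝ) * ((k : ℝ) - 1 / 2) ^ (-α) ≤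
      2 ^ α + interferenceTail α (1 / 2) - interferenceTail α (n + 1 / 2) := by
  induction n with
  | zero =>
    have e : ((1 : ℝ) - 1 / 2) ^ (-α) = 2 ^ α := by
      rw [show (1 : ℝ) - 1 / 2 = 2⁻¹ by norm_num, Real.inv_rpow (by norm_num),
        Real.rpow_neg (by norm_num), inv_inv]
    simp only [zero_add, Finset.Icc_self, Finset.sum_singleton, Nat.cast_one, Nat.cast_zero, e]
    linarith
  | succ n ih =>
    rw [Finset.sum_Icc_succ_top (by omega)]
    have hn : (0 : ℝ) ≤ n := Nat.cast_nonneg n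
    have h := mul_rpow_le_interferenceTail_sub α (n + 3 / 2) hα (by linarith)
    push_cast
    rw [show (n : ℝ) + 1 + 1 - 1 / 2 = n + 3 / 2 by ring,
      show (n : ℝ) + 1 + 1 = n + 3 / 2 + 1 / 2 by ring,
      show (n : ℝ) + 1 + 1 / 2 = n + 3 / 2 by ring]
    rw [show (n : ℝ) + 3 / 2 - 1 = n + 1 / 2 by ring] at h
    linarith

/-- Key summation estimate (Lemma 2, case `α > 2`): the total interference from at most `8k`
transmitters per ring at distance at least `k·t − 1` is at most a constant times `P/t^α`. -/
theorem interference_sum_bound (α t P : ℝ) (hα : 2 < α) (ht : 2 ≤ t) (hP : 0 < P) (m : ℕ) :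
    ∑ k ∈ Finset.Icc 1 m, 8 * (k : ℝ) * P / ((k : ℝ) * t - 1) ^ α ≤
      (8 * P / t ^ α) * (2 ^ α + 2 ^ (α - 2) * (1 / (α - 2) + 1 / (α - 1))) := by
  have ht0 : 0 < t := by linarith
  have hterm : ∀ k ∈ Finset.Icc 1 m, 8 * (k : ℝ) * P / ((k : ℝ) * t - 1) ^ α ≤
      (8 * P / t ^ α) * ((k : ℝ) * ((k : ℝ) - 1 / 2) ^ (-α)) := by
    intro k hk
    have hk1 : (1 : ℝ) ≤ k := by exact_mod_cast (Finset.mem_Icc.mp hk).1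
    have hu : 0 < (k : ℝ) - 1 / 2 := by linarith
    have hle : ((k : ℝ) - 1 / 2) * t ≤ k * t - 1 := by linarith
    have hpow : (((k : ℝ) - 1 / 2) * t) ^ α ≤ (k * t - 1) ^ α :=
      Real.rpow_le_rpow (by positivity) hle (by linarith)
    calc 8 * (k : ℝ) * P / ((k : ℝ) * t - 1) ^ α
        ≤ 8 * (k : ℝ) * P / (((k : ℝ) - 1 / 2) * t) ^ α :=
          div_le_div_of_nonneg_left (by positivity) (by positivity) hpow
      _ = (8 * P / t ^ α) * ((k : ℝ) * ((k : ℝ) - 1 / 2) ^ (-α)) := by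
          rw [Real.mul_rpow hu.le ht0.le, Real.rpow_neg hu.le]
          field_simp
  refine (Finset.sum_le_sum hterm).trans ?_
  rw [← Finset.mul_sum, ← interferenceTail_half]
  refine mul_le_mul_of_nonneg_left ?_ (by positivity)
  cases m with
  | zero =>
    have h := interferenceTail_nonneg α (1 / 2) hα (by norm_num)
    simp only [Finset.Icc_eq_empty_of_lt zero_lt_one, Finset.sum_empty]
    positivity
  | succ n =>
    have h := interferenceTail_nonneg α (n + 1 / 2) hα (by positivity)
    linarith [sum_mul_rpow_le α hα n]
end

section
/- Let t ≥ 2 be a real number, let P > 0 be real, and let m ≥ 1 be a natural number. Then ∑_{k=1}^{m} 8·k·P/(k·t − 1)² ≤ (8·P/t²)·(5 + ln(2m)). (This is the α = 2 case of the summation estimate in the proof of Lemma 2; for α = 2 the interference bound grows logarithmically with the number m of grid rings.) -/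
/-!
Since `t ≥ 2`, `k t - 1 ≥ (k - 1/2) t`, so the `k`-th summand is at most `8 P / t²` times
`k / (k - 1/2)² = 1 / (k - 1/2) + (1/2) / (k - 1/2)²`. In the sum of these, the first part is
controlled by `log ((m + 1) / m) ≥ 1 / (m + 1/2)` and the second telescopes, because
`(m + 1/2)² ≥ m (m + 1)`. By induction (`sum_div_sq_le`) the sum is at most
`9/2 - 1/(2m) + log m`, which is below `5 + log (2m)`.
-/

/-- The correction `-1/(2m)` absorbs the quadratic part of each summand and makes the bound
an equality at `m = 1`. -/
lemma sum_div_sq_le (m : ℕ) (hm : 1 ≤ m) :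
    ∑ k ∈ Finset.Icc 1 m, (k : ℝ) / ((k : ℝ) - 1 / 2) ^ 2 ≤
      9 / 2 - 1 / (2 * (m : ℝ)) + Real.log m := by
  induction m, hm using Nat.le_induction with
  | base => norm_num
  | succ m hm ih =>
    rw [Finset.sum_Icc_succ_top (by omega)]
    have h0 : (0 : ℝ) < m := by exact_mod_cast hm
    have hlog : 1 / ((m : ℝ) + 1 / 2) ≤ Real.log ((m : ℝ) + 1) - Real.log m := by
      have h := Real.le_log_one_add_of_nonneg (x := 1 / (m : ℝ)) (by positivity)
      rw [← Real.log_div (by positivity) h0.ne']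
      convert h using 1
      · field_simp
        ring
      · congr 1
        field_simp
    have hsplit : ((m : ℝ) + 1) / ((m : ℝ) + 1 - 1 / 2) ^ 2 =
        1 / ((m : ℝ) + 1 / 2) + 1 / (2 * ((m : ℝ) + 1 / 2) ^ 2) := by
      rw [show (m : ℝ) + 1 - 1 / 2 = m + 1 / 2 by ring]
      field_simp
      ring
    have htel : 1 / (2 * ((m : ℝ) + 1 / 2) ^ 2) ≤
        1 / (2 * (m : ℝ)) - 1 / (2 * ((m : ℝ) + 1)) := by
      have h : 1 / (2 * (m : ℝ)) - 1 / (2 * ((m : ℝ) + 1)) = 1 / (2 * (m * (m + 1))) := by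
        field_simp
        ring
      rw [h]
      exact one_div_le_one_div_of_le (by positivity) (by nlinarith)
    push_cast
    linarith

/-- Summation estimate of Lemma 2 for `α = 2`: the interference bound grows logarithmically
with the number `m` of grid rings. -/
theorem interference_sum_bound_alpha_two (t P : ℝ) (ht : 2 ≤ t) (hP : 0 < P)
    (m : ℕ) (hm : 1 ≤ m) :
    ∑ k ∈ Finset.Icc 1 m, 8 * (k : ℝ) * P / ((k : ℝ) * t - 1) ^ 2 ≤
      (8 * P / t ^ 2) * (5 + Real.log (2 * m)) := by
  have h0 : (0 : ℝ) < m := by exact_mod_cast hm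
  have hterm : ∀ k ∈ Finset.Icc 1 m, 8 * (k : ℝ) * P / ((k : ℝ) * t - 1) ^ 2 ≤
      (8 * P / t ^ 2) * ((k : ℝ) / ((k : ℝ) - 1 / 2) ^ 2) := by
    intro k hk
    have hk1 : (1 : ℝ) ≤ k := by exact_mod_cast (Finset.mem_Icc.mp hk).1
    have hpos : 0 < ((k : ℝ) - 1 / 2) * t := mul_pos (by linarith) (by linarith)
    have hle : ((k : ℝ) - 1 / 2) * t ≤ k * t - 1 := by linarith
    calc 8 * (k : ℝ) * P / ((k : ℝ) * t - 1) ^ 2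
        ≤ 8 * (k : ℝ) * P / (((k : ℝ) - 1 / 2) * t) ^ 2 := by gcongr
      _ = (8 * P / t ^ 2) * ((k : ℝ) / ((k : ℝ) - 1 / 2) ^ 2) := by
        rw [div_mul_div_comm]
        congr 1 <;> ring
  refine (Finset.sum_le_sum hterm).trans ?_
  rw [← Finset.mul_sum]
  refine mul_le_mul_of_nonneg_left ?_ (by positivity)
  have hlog2 : 0 ≤ Real.log 2 := Real.log_nonneg (by norm_num)
  have hinv : 0 < 1 / (2 * (m : ℝ)) := by positivity
  rw [Real.log_mul two_ne_zero h0.ne']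
  linarith [sum_div_sq_le m hm]
end

section
/- Let p be a real number with 0 < p < 1 − ln 2, and let D, t be natural numbers with 2·D ≤ p·t. Then ∑_{i=0}^{D} C(t,i)·p^i·(1−p)^{t−i} ≤ (D+1)·e^{−(p·t − 2D)/2}. (This is the exponential tail bound underlying Lemma 13: the probability of at most D successes in t Bernoulli(p) trials decays exponentially in p·t − 2D.) -/
/-!
This is Chernoff's method with the tilt `1/2`: since `1 ≤ 2 ^ D * (1/2) ^ i` for `i ≤ D`, the tail
is at most `2 ^ D * ∑ i ≤ t, C(t,i) (p/2)^i (1-p)^(t-i) = 2 ^ D * (1 - p/2) ^ t`, and `2 ≤ e`,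
`1 - p/2 ≤ exp (-p/2)` bound this by `exp (-(p t - 2 D) / 2)`. The factor `D + 1` is slack.
-/

/-- Exponential tail bound underlying Lemma 13: the probability of at most `D` successes in
`t` Bernoulli(`p`) trials decays exponentially in `p·t − 2D`. -/
theorem binomial_tail_exponential (p : ℝ) (hp0 : 0 < p) (hp1 : p < 1 - Real.log 2)
    (D t : ℕ) (hmode : 2 * (D : ℝ) ≤ p * t) :
    ∑ i ∈ Finset.range (D + 1), (t.choose i : ℝ) * p ^ i * (1 - p) ^ (t - i) ≤
      (D + 1 : ℝ) * Real.exp (-(p * t - 2 * D) / 2) := by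
  have hlog : 0 < Real.log 2 := Real.log_pos (by norm_num)
  have hq : 0 ≤ 1 - p := by linarith
  have hDt : D ≤ t := by
    have ht : (0 : ℝ) ≤ t := t.cast_nonneg
    have hD : (0 : ℝ) ≤ D := D.cast_nonneg
    have : (D : ℝ) ≤ t := by nlinarith
    exact_mod_cast this
  have htwo : (2 : ℝ) ≤ Real.exp 1 := by linarith [Real.add_one_le_exp (1 : ℝ)]
  have hbase : 1 - p / 2 ≤ Real.exp (-(p / 2)) := by
    linarith [Real.add_one_le_exp (-(p / 2))]
  calc ∑ i ∈ Finset.range (D + 1), (t.choose i : ℝ) * p ^ i * (1 - p) ^ (t - i)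
      ≤ ∑ i ∈ Finset.range (D + 1),
          2 ^ D * ((p / 2) ^ i * (1 - p) ^ (t - i) * (t.choose i : ℝ)) := by
        refine Finset.sum_le_sum fun i hi => ?_
        have hiD : i ≤ D := Nat.lt_succ_iff.mp (Finset.mem_range.mp hi)
        have hpow : (1 : ℝ) ≤ 2 ^ (D - i) := one_le_pow₀ (by norm_num)
        have hsplit : (2 : ℝ) ^ D * (p / 2) ^ i = 2 ^ (D - i) * p ^ i := by
          rw [← Nat.sub_add_cancel hiD, pow_add, div_pow, Nat.add_sub_cancel]
          field_simp
        have hnn : 0 ≤ (t.choose i : ℝ) * p ^ i * (1 - p) ^ (t - i) := by positivity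
        calc _ ≤ 2 ^ (D - i) * ((t.choose i : ℝ) * p ^ i * (1 - p) ^ (t - i)) :=
              le_mul_of_one_le_left hnn hpow
          _ = (2 ^ (D - i) * p ^ i) * ((1 - p) ^ (t - i) * (t.choose i : ℝ)) := by ring
          _ = _ := by rw [← hsplit]; ring
    _ ≤ ∑ i ∈ Finset.range (t + 1),
          2 ^ D * ((p / 2) ^ i * (1 - p) ^ (t - i) * (t.choose i : ℝ)) := by
        refine Finset.sum_le_sum_of_subset_of_nonneg
          (Finset.range_mono (Nat.succ_le_succ hDt)) fun i _ _ => ?_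
        positivity
    _ = 2 ^ D * (1 - p / 2) ^ t := by
        rw [← Finset.mul_sum, ← add_pow]
        ring
    _ ≤ Real.exp 1 ^ D * Real.exp (-(p / 2)) ^ t := by
        have : 0 ≤ 1 - p / 2 := by linarith
        gcongr
    _ = Real.exp (-(p * t - 2 * D) / 2) := by
        rw [← Real.exp_nat_mul, ← Real.exp_nat_mul, ← Real.exp_add]
        ring_nf
    _ ≤ (D + 1 : ℝ) * Real.exp (-(p * t - 2 * D) / 2) :=
        le_mul_of_one_le_left (Real.exp_pos _).le (by linarith [D.cast_nonneg (α := ℝ)])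
end

section
/- (Lemma 13) Let p be a real number with 0 < p < 1 − ln 2, let δ be a real number with 0 < δ < 1, and let D, t be natural numbers with p·t ≥ 2·D + 2·ln(1/δ). Then ∑_{i=0}^{D} C(t,i)·p^i·(1−p)^{t−i} ≤ (D+1)·δ, i.e. the probability of obtaining at most D successes in t Bernoulli trials with success probability p is at most (D+1)·δ. -/
/-!
The proof is a Chernoff bound with exponential parameter `ln 2`. For `i ≤ D` one has
`p ^ i ≤ 2 ^ D * (p / 2) ^ i`, so the lower tail is at most
`2 ^ D * ∑ i, C(t, i) (p / 2) ^ i (1 - p) ^ (t - i) = 2 ^ D * (1 - p / 2) ^ t` by the binomial theorem.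
Since `2 ≤ e` and `1 - p / 2 ≤ exp (-p / 2)`, this is at most `exp (D - p t / 2) ≤ δ`,
which is stronger than the bound `(D + 1) δ`.
-/

/-- The Chernoff bound for the lower tail, with exponential parameter `ln 2`. -/
lemma lower_tail_le_two_pow_mul (p : ℝ) (hp0 : 0 ≤ p) (hp1 : p ≤ 1) (D t : ℕ) (hDt : D ≤ t) :
    ∑ i ∈ Finset.range (D + 1), (t.choose i : ℝ) * p ^ i * (1 - p) ^ (t - i) ≤
      2 ^ D * (1 - p / 2) ^ t := by
  have hq : 0 ≤ 1 - p := by linarith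
  have hbinom : (1 - p / 2) ^ t =
      ∑ i ∈ Finset.range (t + 1), (p / 2) ^ i * (1 - p) ^ (t - i) * (t.choose i : ℝ) := by
    rw [← add_pow]
    ring
  rw [hbinom, Finset.mul_sum]
  calc _ ≤ ∑ i ∈ Finset.range (D + 1),
          (2 : ℝ) ^ D * ((p / 2) ^ i * (1 - p) ^ (t - i) * (t.choose i : ℝ)) := by
        refine Finset.sum_le_sum fun i hi => ?_
        have hiD : i ≤ D := by
          have := Finset.mem_range.mp hi
          omega
        have hpow : p ^ i ≤ 2 ^ D * (p / 2) ^ i := by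
          calc p ^ i = 2 ^ i * (p / 2) ^ i := by
                rw [← mul_pow]
                ring
            _ ≤ 2 ^ D * (p / 2) ^ i := by
                gcongr
                norm_num
        calc (t.choose i : ℝ) * p ^ i * (1 - p) ^ (t - i)
            ≤ (t.choose i : ℝ) * (2 ^ D * (p / 2) ^ i) * (1 - p) ^ (t - i) := by gcongr
          _ = _ := by ring
    _ ≤ _ := by
        refine Finset.sum_le_sum_of_subset_of_nonneg ?_ fun i _ _ => by positivity
        exact Finset.range_mono (by omega)

/-- Lemma 13: if `p·t ≥ 2D + 2·ln(1/δ)`, then the probability of obtaining at most `D`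
successes in `t` Bernoulli trials with success probability `p` is at most `(D+1)·δ`. -/
theorem lemma13_few_successes (p δ : ℝ) (hp0 : 0 < p) (hp1 : p < 1 - Real.log 2)
    (hδ0 : 0 < δ) (hδ1 : δ < 1) (D t : ℕ)
    (ht : p * t ≥ 2 * D + 2 * Real.log (1 / δ)) :
    ∑ i ∈ Finset.range (D + 1), (t.choose i : ℝ) * p ^ i * (1 - p) ^ (t - i) ≤
      (D + 1 : ℝ) * δ := by
  have hlog2 : 0 < Real.log 2 := Real.log_pos (by norm_num)
  have hp : p ≤ 1 := by linarith
  rw [one_div, Real.log_inv] at ht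
  have hlogδ : Real.log δ < 0 := Real.log_neg hδ0 hδ1
  have hDt : D ≤ t := by
    have hD : (0 : ℝ) ≤ D := D.cast_nonneg
    have hpt : p * t ≤ 1 * t := by gcongr
    have : (D : ℝ) ≤ t := by linarith
    exact_mod_cast this
  have h2 : (2 : ℝ) ≤ Real.exp 1 := by
    have := Real.add_one_le_exp (1 : ℝ)
    linarith
  have h1p : 1 - p / 2 ≤ Real.exp (-(p / 2)) := Real.one_sub_le_exp_neg _
  have h1p0 : 0 ≤ 1 - p / 2 := by linarith
  calc _ ≤ 2 ^ D * (1 - p / 2) ^ t := lower_tail_le_two_pow_mul p hp0.le hp D t hDt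
    _ ≤ Real.exp 1 ^ D * Real.exp (-(p / 2)) ^ t := by gcongr
    _ = Real.exp (D * 1 + t * -(p / 2)) := by
        rw [← Real.exp_nat_mul, ← Real.exp_nat_mul, ← Real.exp_add]
    _ ≤ Real.exp (Real.log δ) := Real.exp_le_exp.mpr (by linarith)
    _ = δ := Real.exp_log hδ0
    _ ≤ (D + 1 : ℝ) * δ := le_mul_of_one_le_left hδ0.le (by simp)
end

section
/- (Fact 14) Let 0 < q ≤ 1, let D be a natural number, let S be a finite set of points of the Euclidean plane ℝ² and let s ∈ S. Let G be the graph on S in which two distinct points are adjacent if and only if their Euclidean distance is at most q, and suppose that every point of S is joined to s in G by a path of length at most D (i.e. the eccentricity of s is at most D). Then there exists a subset W ⊆ S of cardinality at most 4·(D+1)² that is a q-net for S, i.e. every point of S is at Euclidean distance at most q from some point of W. -/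
/-!
Take `W ⊆ S` of maximal cardinality among the subsets whose points are pairwise at distance
more than `q`. By maximality `W` is a `q`-net. A walk of length at most `D` has
Euclidean length at most `D * q`, so `S` lies in the closed ball of radius `D * q` around `s`.
The open discs of radius `q / 2` around the points of `W` are pairwise disjoint and lie in the
disc of radius `(2 * D + 1) * (q / 2)` around `s`. Comparing areas gives
`W.card ≤ (2 * D + 1) ^ 2 ≤ 4 * (D + 1) ^ 2`.
-/

open scoped Classical
open MeasureTheory Metric

/-- A finite family of points of the plane which are pairwise at distance at least `q` and lie
within `D * q` of `s` has at most `(2 * D + 1) ^ 2` members, by comparison of areas. -/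
theorem card_le_of_separated_plane {q : ℝ} (hq0 : 0 < q) (D : ℕ)
    (W : Finset (EuclideanSpace ℝ (Fin 2))) (s : EuclideanSpace ℝ (Fin 2))
    (hsep : ∀ x ∈ W, ∀ y ∈ W, x ≠ y → q ≤ dist x y) (hW : ∀ x ∈ W, dist x s ≤ D * q) :
    W.card ≤ (2 * D + 1) ^ 2 := by
  let μ : Measure (EuclideanSpace ℝ (Fin 2)) := volume
  have hdisj : (W : Set (EuclideanSpace ℝ (Fin 2))).PairwiseDisjoint
      (fun x => ball x (q / 2)) := by
    intro x hx y hy hxy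
    apply ball_disjoint_ball
    linarith [hsep x hx y hy hxy]
  have hsub : (⋃ x ∈ W, ball x (q / 2)) ⊆ ball s ((2 * D + 1) * (q / 2)) := by
    refine Set.iUnion₂_subset fun x hx => ball_subset_ball' ?_
    linarith [hW x hx]
  have hle : (W.card : ENNReal) * μ (ball 0 (q / 2))
      ≤ ENNReal.ofReal ((2 * D + 1) ^ 2) * μ (ball 0 (q / 2)) := by
    calc (W.card : ENNReal) * μ (ball 0 (q / 2))
        = ∑ x ∈ W, μ (ball x (q / 2)) := by
          simp [μ, Measure.addHaar_ball_center]
      _ = μ (⋃ x ∈ W, ball x (q / 2)) :=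
          (measure_biUnion_finset hdisj fun _ _ => measurableSet_ball).symm
      _ ≤ μ (ball s ((2 * D + 1) * (q / 2))) := measure_mono hsub
      _ = _ := by
          rw [Measure.addHaar_ball_mul μ s (by positivity), finrank_euclideanSpace_fin]
  have hpos : μ (ball 0 (q / 2)) ≠ 0 := (measure_ball_pos μ _ (by positivity)).ne'
  have h := (ENNReal.mul_le_mul_iff_left hpos measure_ball_lt_top.ne).1 hle
  have h2 : ENNReal.ofReal ((2 * D + 1) ^ 2) = (((2 * D + 1) ^ 2 : ℕ) : ENNReal) := by
    rw [← ENNReal.ofReal_natCast]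
    push_cast
    rfl
  rw [h2] at h
  exact_mod_cast h

theorem dist_le_length_mul {V E : Type*} [PseudoMetricSpace E] {G : SimpleGraph V} (f : V → E)
    {q : ℝ} (hG : ∀ a b, G.Adj a b → dist (f a) (f b) ≤ q) {u v : V} (w : G.Walk u v) :
    dist (f u) (f v) ≤ w.length * q := by
  induction w with
  | nil => simp
  | @cons a b c h w ih =>
    have := dist_triangle (f a) (f b) (f c)
    have := hG _ _ h
    rw [SimpleGraph.Walk.length_cons]
    push_cast
    linarith

/-- A finite set has a `q`-separated `q`-net: a separated subset of maximal cardinality. -/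
theorem exists_separated_net {E : Type*} [MetricSpace E] {q : ℝ} (hq0 : 0 < q) (S : Finset E) :
    ∃ W ⊆ S, (∀ x ∈ W, ∀ y ∈ W, x ≠ y → q ≤ dist x y) ∧
      ∀ v ∈ S, ∃ w ∈ W, dist v w ≤ q := by
  obtain ⟨W, hW, hmax⟩ := Finset.exists_max_image
    (S.powerset.filter fun W => ∀ x ∈ W, ∀ y ∈ W, x ≠ y → q ≤ dist x y) Finset.card
    ⟨∅, by simp⟩
  simp only [Finset.mem_filter, Finset.mem_powerset] at hW hmax
  refine ⟨W, hW.1, hW.2, fun v hv => ?_⟩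
  by_contra! hfar
  have hvW : v ∉ W := fun h => by
    have := hfar v h
    rw [dist_self] at this
    linarith
  -- An uncovered `v` could be added to `W`, against maximality.
  have := hmax (insert v W) ⟨Finset.insert_subset hv hW.1, by
    intro x hx y hy hxy
    rcases Finset.mem_insert.1 hx with rfl | hxW <;>
      rcases Finset.mem_insert.1 hy with rfl | hyW
    · exact absurd rfl hxy
    · exact (hfar y hyW).le
    · rw [dist_comm]
      exact (hfar x hxW).le
    · exact hW.2 x hxW y hyW hxy⟩
  rw [Finset.card_insert_of_notMem hvW] at this
  omega

/-- Fact 14: if the graph on a finite set `S` of points of the plane, joining points at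
distance at most `q ≤ 1`, has eccentricity at most `D` from `s`, then `S` contains a
`q`-net of cardinality at most `4·(D+1)²`. -/
theorem fact14_net (q : ℝ) (hq0 : 0 < q) (hq1 : q ≤ 1) (D : ℕ)
    (S : Finset (EuclideanSpace ℝ (Fin 2))) (s : EuclideanSpace ℝ (Fin 2)) (hs : s ∈ S)
    (G : SimpleGraph {x // x ∈ S})
    (hG : G = SimpleGraph.fromRel
      (fun a b : {x // x ∈ S} => dist (a : EuclideanSpace ℝ (Fin 2)) b ≤ q))
    (hecc : ∀ v : {x // x ∈ S}, ∃ w : G.Walk ⟨s, hs⟩ v, w.length ≤ D) :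
    ∃ W ⊆ S, W.card ≤ 4 * (D + 1) ^ 2 ∧
      ∀ v ∈ S, ∃ w ∈ W, dist v w ≤ q := by
  obtain ⟨W, hWS, hsep, hnet⟩ := exists_separated_net hq0 S
  refine ⟨W, hWS, ?_, hnet⟩
  have hcard : W.card ≤ (2 * D + 1) ^ 2 := by
    refine card_le_of_separated_plane hq0 D W s hsep fun x hx => ?_
    obtain ⟨w, hw⟩ := hecc ⟨x, hWS hx⟩
    have hadj : ∀ a b, G.Adj a b → dist (a : EuclideanSpace ℝ (Fin 2)) b ≤ q := by
      intro a b hab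
      rw [hG, SimpleGraph.fromRel_adj] at hab
      rcases hab.2 with h | h
      · exact h
      · rwa [dist_comm]
    have h := dist_le_length_mul Subtype.val hadj w
    rw [dist_comm]
    refine h.trans ?_
    gcongr
  calc W.card ≤ (2 * D + 1) ^ 2 := hcard
    _ ≤ (2 * (D + 1)) ^ 2 := Nat.pow_le_pow_left (by omega) 2
    _ = 4 * (D + 1) ^ 2 := by ring
end

section
/- Let n ≥ 1 and Δ ≥ 1 be natural numbers with Δ ≤ n. Let l be the least natural number with Δ·2^l ≥ n, and let K be the greatest natural number with 2^K ≤ n. Then ∑_{k=l}^{K} (Δ·2^k/n) · ∏_{j=l}^{k−1} (1 − 2^j/n)^Δ ≤ 6 (the sum being empty, hence 0, if l > K). (This is the computation in Fact 23: when each of Δ stations transmits with probability 2^k/n in phase k, the expected number of stations transmitting in the phase in which the box first becomes active is at most 6.) -/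
/-!
Write `x k = Δ * 2 ^ k / n` and `P k = ∏ j ∈ Ico l k, (1 - 2 ^ j / n) ^ Δ`. From
`(1 - p) ^ Δ ≤ exp (-Δ p) ≤ 1 / (1 + Δ p)` one gets `(1 + x k) * P (k + 1) ≤ P k`, and since
`x (k + 1) = 2 * x k` this reads `x (k + 1) * P (k + 1) ≤ 2 * (P k - P (k + 1))`. The sum therefore
telescopes to at most `x l + 2`. Minimality of `l` (or `Δ ≤ n`, if `l = 0`) gives `x l ≤ 2`, so the
sum is in fact at most `4`.
-/

/-- Bernoulli-type estimate behind the telescoping. -/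
lemma one_add_mul_one_sub_pow_le_one (Δ : ℕ) (p : ℝ) (h1 : p ≤ 1) :
    (1 + Δ * p) * (1 - p) ^ Δ ≤ 1 := by
  have hq : 0 ≤ 1 - p := by linarith
  calc (1 + Δ * p) * (1 - p) ^ Δ
      ≤ Real.exp (Δ * p) * Real.exp (-p) ^ Δ := by
        gcongr
        · linarith [Real.add_one_le_exp ((Δ : ℝ) * p)]
        · linarith [Real.add_one_le_exp (-p)]
    _ = 1 := by
        rw [← Real.exp_nat_mul, ← Real.exp_add]
        simp

/-- The telescoped form of the sum; the summand `2 * ∏ …` is what remains to be spent on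
later phases. -/
lemma sum_add_two_mul_prod_le (n Δ l K : ℕ) (hn : 1 ≤ n) (hK : 2 ^ K ≤ n) (M : ℕ)
    (hlM : l ≤ M) (hMK : M ≤ K) :
    ∑ k ∈ Finset.Icc l M,
        ((Δ : ℝ) * 2 ^ k / n) * ∏ j ∈ Finset.Ico l k, (1 - (2 : ℝ) ^ j / n) ^ Δ
      + 2 * ∏ j ∈ Finset.Ico l M, (1 - (2 : ℝ) ^ j / n) ^ Δ ≤ (Δ : ℝ) * 2 ^ l / n + 2 := by
  have hn0 : (0 : ℝ) < n := by exact_mod_cast hn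
  have hp : ∀ j ≤ K, (2 : ℝ) ^ j / n ≤ 1 := fun j hj => by
    rw [div_le_one hn0]
    exact_mod_cast (Nat.pow_le_pow_right two_pos hj).trans hK
  induction M, hlM using Nat.le_induction with
  | base => simp
  | succ M hlM ih =>
    have ih := ih (by omega)
    rw [Finset.sum_Icc_succ_top (by omega), Finset.prod_Ico_succ_top hlM]
    have hP : 0 ≤ ∏ j ∈ Finset.Ico l M, (1 - (2 : ℝ) ^ j / n) ^ Δ :=
      Finset.prod_nonneg fun j hj => pow_nonneg
        (by linarith [hp j (by have := Finset.mem_Ico.1 hj; omega)]) _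
    have hb := mul_le_mul_of_nonneg_left
      (one_add_mul_one_sub_pow_le_one Δ ((2 : ℝ) ^ M / n) (hp M (by omega))) hP
    have hx : (Δ : ℝ) * 2 ^ (M + 1) / n = 2 * (Δ * (2 ^ M / n)) := by ring
    rw [hx]
    linarith

/-- Fact 23 (computation): with `l` the least phase with `Δ·2^l ≥ n` and `K` the greatest
with `2^K ≤ n`, the expected number of stations transmitting in the phase in which the box
first becomes active is at most 6. -/
theorem fact23_expected_transmitters (n Δ l K : ℕ) (hn : 1 ≤ n) (hΔ : 1 ≤ Δ) (hΔn : Δ ≤ n)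
    (hl : n ≤ Δ * 2 ^ l) (hl' : ∀ j < l, Δ * 2 ^ j < n)
    (hK : 2 ^ K ≤ n) (hK' : n < 2 ^ (K + 1)) :
    ∑ k ∈ Finset.Icc l K,
        ((Δ : ℝ) * 2 ^ k / n) * ∏ j ∈ Finset.Ico l k, (1 - (2 : ℝ) ^ j / n) ^ Δ ≤ 6 := by
  have hn0 : (0 : ℝ) < n := by exact_mod_cast hn
  rcases lt_or_ge K l with h | hlK
  · simp [Finset.Icc_eq_empty_of_lt h]
  have hx : (Δ : ℝ) * 2 ^ l / n ≤ 2 := by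
    have hnat : Δ * 2 ^ l ≤ 2 * n := by
      cases l with
      | zero => simp only [pow_zero]; omega
      | succ m =>
        have := hl' m (by omega)
        rw [pow_succ]
        linarith
    rw [div_le_iff₀ hn0]
    exact_mod_cast hnat
  have hP : 0 ≤ ∏ j ∈ Finset.Ico l K, (1 - (2 : ℝ) ^ j / n) ^ Δ := by
    refine Finset.prod_nonneg fun j hj => pow_nonneg (sub_nonneg.2 ?_) _
    rw [div_le_one hn0]
    exact_mod_cast (Nat.pow_le_pow_right two_pos (Finset.mem_Ico.1 hj).2.le).trans hK
  linarith [sum_add_two_mul_prod_le n Δ l K hn hK K hlK le_rfl]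
end

section
/- Let n ≥ 1, Δ ≥ 1 and k ≥ 0 be natural numbers and set x' = Δ·2^k/n. If x' ≤ 1/3, then Δ·(2^k/n)·(1 − 2^k/n)^{Δ−1} · ∏_{j=0}^{k−1} (1 − 2^j/n)^Δ ≥ x'·(1 − 2·x'); moreover, if in addition x' ≥ 1/6, then this quantity is at least 1/9. (This is the computation in Fact 24: the probability that exactly one of Δ stations transmits in the k-th doubling round, and no station transmitted in any earlier round, is at least x'(1 − 2x') ≥ 1/9 when 1/6 ≤ x' = 2^k·Δ/n ≤ 1/3.) -/
/-!
With `y = Δ·2^m/n`, Bernoulli's inequality bounds the probability of silence in round `m` below by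
`1 - y`. Because the transmission probabilities double, silence in all rounds before `m` also has
probability at least `1 - y`: inductively, `(1 - y)² ≥ 1 - 2y`, and `2y` is the value for `m + 1`
(`one_sub_le_prod_silent`). For `m = k` the two bounds multiply to `(1 - x')² ≥ 1 - 2x'`, and
`x'(1 - 2x') - 1/9 = 2(x' - 1/6)(1/3 - x')` gives the numerical bound.
-/

lemma one_sub_mul_le_pow (p : ℝ) (hp : p ≤ 1) (d : ℕ) : 1 - d * p ≤ (1 - p) ^ d := by
  have h := one_add_mul_le_pow (a := -p) (by linarith) d
  simpa [← sub_eq_add_neg] using h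

/-- Silence in all rounds before `m` is at least as likely as Bernoulli's bound for silence in
round `m` alone. -/
lemma one_sub_le_prod_silent (n Δ : ℕ) (hΔ : 1 ≤ Δ) (m : ℕ)
    (h : (Δ : ℝ) * (2 ^ m / n) ≤ 1) :
    1 - (Δ : ℝ) * (2 ^ m / n) ≤ ∏ j ∈ Finset.range m, (1 - (2 : ℝ) ^ j / n) ^ Δ := by
  induction m with
  | zero =>
    have : (0 : ℝ) ≤ Δ * (2 ^ 0 / n) := by positivity
    simpa using this
  | succ m ih =>
    have hd : (Δ : ℝ) * (2 ^ (m + 1) / n) = 2 * (Δ * (2 ^ m / n)) := by ring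
    rw [hd] at h ⊢
    have hΔ' : (1 : ℝ) ≤ Δ := by exact_mod_cast hΔ
    have hp0 : (0 : ℝ) ≤ 2 ^ m / n := by positivity
    have hp : (2 : ℝ) ^ m / n ≤ Δ * (2 ^ m / n) := le_mul_of_one_le_left hp0 hΔ'
    have hB := one_sub_mul_le_pow ((2 : ℝ) ^ m / n) (by linarith) Δ
    have hI := ih (by linarith)
    rw [Finset.prod_range_succ]
    have hM := mul_le_mul hI hB (by linarith) (by linarith)
    nlinarith [sq_nonneg ((Δ : ℝ) * (2 ^ m / n))]

/-- Fact 24 (computation): the probability that exactly one of `Δ` stations transmits in the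
`k`-th doubling round and none transmitted earlier is at least `x'·(1 − 2x')`, where
`x' = Δ·2^k/n`; moreover it is at least `1/9` when `1/6 ≤ x' ≤ 1/3`. -/
theorem fact24_exactly_one_probability (n Δ k : ℕ) (hn : 1 ≤ n) (hΔ : 1 ≤ Δ)
    (x' : ℝ) (hx' : x' = (Δ : ℝ) * 2 ^ k / n) (hx3 : x' ≤ 1 / 3) :
    x' * (1 - 2 * x') ≤
      (Δ : ℝ) * (2 ^ k / n) * (1 - (2 : ℝ) ^ k / n) ^ (Δ - 1) *
        ∏ j ∈ Finset.range k, (1 - (2 : ℝ) ^ j / n) ^ Δ ∧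
    (1 / 6 ≤ x' →
      (1 : ℝ) / 9 ≤
        (Δ : ℝ) * (2 ^ k / n) * (1 - (2 : ℝ) ^ k / n) ^ (Δ - 1) *
          ∏ j ∈ Finset.range k, (1 - (2 : ℝ) ^ j / n) ^ Δ) := by
  have hx : x' = (Δ : ℝ) * (2 ^ k / n) := by rw [hx']; ring
  have hΔ' : (1 : ℝ) ≤ Δ := by exact_mod_cast hΔ
  have hp0 : (0 : ℝ) ≤ 2 ^ k / n := by positivity
  have hp : (2 : ℝ) ^ k / n ≤ x' := hx ▸ le_mul_of_one_le_left hp0 hΔ'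
  have hP := one_sub_le_prod_silent n Δ hΔ k (by linarith)
  have hB := one_sub_mul_le_pow ((2 : ℝ) ^ k / n) (by linarith) (Δ - 1)
  rw [Nat.cast_sub hΔ, Nat.cast_one, sub_mul, ← hx] at hB
  rw [← hx] at hP ⊢
  have hB' : 1 - x' ≤ (1 - (2 : ℝ) ^ k / n) ^ (Δ - 1) := by linarith
  have hM := mul_le_mul hB' hP (by linarith) (by linarith)
  have main : x' * (1 - 2 * x') ≤ x' * (1 - (2 : ℝ) ^ k / n) ^ (Δ - 1) *
      ∏ j ∈ Finset.range k, (1 - (2 : ℝ) ^ j / n) ^ Δ := by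
    rw [mul_assoc]
    exact mul_le_mul_of_nonneg_left (by nlinarith [sq_nonneg x']) (by linarith)
  refine ⟨main, fun h6 => le_trans ?_ main⟩
  nlinarith [mul_nonneg (sub_nonneg.2 h6) (sub_nonneg.2 hx3)]
end

section
/- Let α > 2 and t ≥ 2 be real numbers, let P > 0 be real, let u ∈ ℝ², let T be a finite set of points of ℝ², and let f : T → ℕ be a function with f(w) ≥ 1 for all w ∈ T, such that dist(w,u) ≥ (f(w) − 1/2)·t for every w ∈ T, and for every k ≥ 1 the set {w ∈ T : f(w) = k} has at most 8·k elements. Then the total interference at u satisfies ∑_{w ∈ T} P·dist(w,u)^{−α} ≤ (8·P/t^α)·(2^α + 2^{α−2}·(1/(α−2) + 1/(α−1))). (This is the deterministic worst-case interference bound of Lemma 2: if transmitters are grouped into concentric rings, the k-th ring containing at most 8k transmitters at distance at least (k − 1/2)·t from the receiver, then the total interference at the receiver is at most a constant (depending only on α) times P/t^α.) -/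
/-!
Each transmitter of ring `k` contributes at most `P * ((k - 1/2) * t) ^ (-α)`, and there are at most
`8 * k` of them, so the total is at most `8 * P / t ^ α` times `∑ k * (k - 1/2) ^ (-α)`.
The term `k = 1` equals `2 ^ α`. In the others, split `k = (k - 1/2) + 1/2` and compare
the decreasing functions `x ^ (1 - α)` and `x ^ (-α)` with their integrals from `1/2` to infinity,
which produces exactly `2 ^ (α - 2) * (1 / (α - 2) + 1 / (α - 1))`. The integral comparison is
done in telescoping form: `rpow_succ_le_telescope` is the bound over one unit interval, and
`ring_sum_add_tail_le` sums it by induction, carrying the tail of the integral.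
-/

open scoped Classical

/-- The value `(x + 1) ^ (-(β + 1))` is at most the integral of the decreasing function
`y ^ (-(β + 1))` over `[x, x + 1]`. -/
lemma rpow_succ_le_telescope {x β : ℝ} (hx : 0 < x) (hβ : 0 < β) :
    (x + 1) ^ (-(β + 1)) ≤ x ^ (-β) / β - (x + 1) ^ (-β) / β := by
  have hx1 : 0 < x + 1 := by linarith
  have hy : 0 < x / (x + 1) := by positivity
  -- Bernoulli's inequality `y ^ (-β) ≥ 1 - β * (y - 1)` at `y = x / (x + 1)`.
  have h1 : 1 + β / (x + 1) ≤ (x / (x + 1)) ^ (-β) := by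
    rw [Real.rpow_def_of_pos hy]
    have h2 := Real.add_one_le_exp (Real.log (x / (x + 1)) * -β)
    have h3 := Real.log_le_sub_one_of_pos hy
    have h4 : x / (x + 1) - 1 = -(1 / (x + 1)) := by field_simp; ring
    rw [h4] at h3
    have h5 : β / (x + 1) = β * (1 / (x + 1)) := by ring
    rw [h5]
    nlinarith
  have h6 : x ^ (-β) = (x + 1) ^ (-β) * (x / (x + 1)) ^ (-β) := by
    rw [← Real.mul_rpow hx1.le hy.le]
    congr 1
    field_simp
  have h7 : (x + 1) ^ (-(β + 1)) = (x + 1) ^ (-β) / (x + 1) := by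
    rw [← Real.rpow_sub_one hx1.ne']
    congr 1
    ring
  have h8 : 0 < (x + 1) ^ (-β) := Real.rpow_pos_of_pos hx1 _
  rw [h7, h6, ← sub_div, le_div_iff₀ hβ]
  calc (x + 1) ^ (-β) / (x + 1) * β
      = (x + 1) ^ (-β) * (1 + β / (x + 1)) - (x + 1) ^ (-β) := by ring
    _ ≤ _ := by gcongr

/-- The partial sum of `k * (k - 1/2) ^ (-α)` up to `k = n + 1`, together with the tail
`∫ y ^ (1 - α) + y ^ (-α) / 2` over `[n + 1/2, ∞)`, which serves as the induction invariant. -/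
lemma ring_sum_add_tail_le {α : ℝ} (hα : 2 < α) (n : ℕ) :
    ∑ k ∈ Finset.Icc 1 (n + 1), (k : ℝ) * ((k : ℝ) - 1 / 2) ^ (-α) +
      (((n : ℝ) + 1 / 2) ^ (-(α - 2)) / (α - 2) +
        ((n : ℝ) + 1 / 2) ^ (-(α - 1)) / (α - 1) / 2) ≤
      2 ^ α + 2 ^ (α - 2) * (1 / (α - 2) + 1 / (α - 1)) := by
  induction n with
  | zero =>
    have half (b : ℝ) : ((1 : ℝ) / 2) ^ (-b) = 2 ^ b := by
      rw [one_div, Real.inv_rpow (by norm_num), Real.rpow_neg (by norm_num), inv_inv]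
    have h2 : (2 : ℝ) ^ (α - 1) = 2 ^ (α - 2) * 2 := by
      rw [← Real.rpow_add_one (by norm_num)]
      congr 1
      ring
    have h3 : (1 : ℝ) - 1 / 2 = 1 / 2 := by norm_num
    simp only [zero_add, Finset.Icc_self, Finset.sum_singleton, Nat.cast_one, Nat.cast_zero, h3,
      half, h2]
    apply le_of_eq
    ring
  | succ n ih =>
    rw [Finset.sum_Icc_succ_top (by omega)]
    have hx : (0 : ℝ) < (n : ℝ) + 1 / 2 := by positivity
    have hx1 : (0 : ℝ) < (n : ℝ) + 1 / 2 + 1 := by positivity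
    have a := rpow_succ_le_telescope hx (show 0 < α - 2 by linarith)
    have b := rpow_succ_le_telescope hx (show 0 < α - 1 by linarith)
    have e1 : -(α - 2 + 1) = -α + 1 := by ring
    have e2 : -(α - 1 + 1) = -α := by ring
    rw [e1, Real.rpow_add_one hx1.ne'] at a
    rw [e2] at b
    have e3 : ((n + 1 + 1 : ℕ) : ℝ) - 1 / 2 = (n : ℝ) + 1 / 2 + 1 := by push_cast; ring
    have e4 : ((n + 1 : ℕ) : ℝ) + 1 / 2 = (n : ℝ) + 1 / 2 + 1 := by push_cast; ring
    have e5 : ((n + 1 + 1 : ℕ) : ℝ) = ((n : ℝ) + 1 / 2 + 1) + 1 / 2 := by push_cast; ring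
    rw [e3, e4, e5]
    linarith

lemma ring_sum_le {α : ℝ} (hα : 2 < α) (n : ℕ) :
    ∑ k ∈ Finset.Icc 1 (n + 1), (k : ℝ) * ((k : ℝ) - 1 / 2) ^ (-α) ≤
      2 ^ α + 2 ^ (α - 2) * (1 / (α - 2) + 1 / (α - 1)) := by
  refine le_trans (le_add_of_nonneg_right ?_) (ring_sum_add_tail_le hα n)
  have h1 : 0 < α - 2 := by linarith
  have h2 : 0 < α - 1 := by linarith
  positivity

/-- Deterministic worst-case interference bound of Lemma 2: if transmitters are grouped into
concentric rings, the `k`-th ring containing at most `8k` transmitters at distance at least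
`(k − 1/2)·t` from the receiver, then the total interference at the receiver is at most a
constant (depending only on `α`) times `P/t^α`. -/
theorem lemma2_interference_bound (α t P : ℝ) (hα : 2 < α) (ht : 2 ≤ t) (hP : 0 < P)
    (u : EuclideanSpace ℝ (Fin 2)) (T : Finset (EuclideanSpace ℝ (Fin 2)))
    (f : EuclideanSpace ℝ (Fin 2) → ℕ)
    (hf1 : ∀ w ∈ T, 1 ≤ f w)
    (hfd : ∀ w ∈ T, ((f w : ℝ) - 1 / 2) * t ≤ dist w u)
    (hcard : ∀ k : ℕ, 1 ≤ k → (T.filter (fun w => f w = k)).card ≤ 8 * k) :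
    ∑ w ∈ T, P * dist w u ^ (-α) ≤
      (8 * P / t ^ α) * (2 ^ α + 2 ^ (α - 2) * (1 / (α - 2) + 1 / (α - 1))) := by
  have ht0 : 0 < t := by linarith
  have hmaps : ∀ w ∈ T, f w ∈ Finset.Icc 1 (T.sup f + 1) := fun w hw =>
    Finset.mem_Icc.2 ⟨hf1 w hw, (Finset.le_sup hw).trans (Nat.le_succ _)⟩
  rw [← Finset.sum_fiberwise_of_maps_to hmaps]
  have hring : ∀ k ∈ Finset.Icc 1 (T.sup f + 1),
      ∑ w ∈ T with f w = k, P * dist w u ^ (-α) ≤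
        8 * P / t ^ α * ((k : ℝ) * ((k : ℝ) - 1 / 2) ^ (-α)) := by
    intro k hk
    have hk1 : 1 ≤ k := (Finset.mem_Icc.1 hk).1
    have hk1' : (1 : ℝ) ≤ k := by exact_mod_cast hk1
    have hk2 : (0 : ℝ) < (k : ℝ) - 1 / 2 := by linarith
    have hc : ((T.filter (fun w => f w = k)).card : ℝ) ≤ 8 * k := by exact_mod_cast hcard k hk1
    have hterm : ∀ w ∈ T.filter (fun w => f w = k),
        P * dist w u ^ (-α) ≤ P * (((k : ℝ) - 1 / 2) * t) ^ (-α) := by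
      intro w hw
      obtain ⟨hwT, rfl⟩ := Finset.mem_filter.1 hw
      exact mul_le_mul_of_nonneg_left
        (Real.rpow_le_rpow_of_nonpos (by positivity) (hfd w hwT) (by linarith)) hP.le
    calc ∑ w ∈ T with f w = k, P * dist w u ^ (-α)
        ≤ (T.filter (fun w => f w = k)).card • (P * (((k : ℝ) - 1 / 2) * t) ^ (-α)) :=
          Finset.sum_le_card_nsmul _ _ _ hterm
      _ ≤ 8 * k * (P * (((k : ℝ) - 1 / 2) * t) ^ (-α)) := by
          rw [nsmul_eq_mul]
          gcongr
      _ = 8 * P / t ^ α * ((k : ℝ) * ((k : ℝ) - 1 / 2) ^ (-α)) := by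
          rw [Real.mul_rpow hk2.le ht0.le, Real.rpow_neg ht0.le]
          ring
  refine (Finset.sum_le_sum hring).trans ?_
  rw [← Finset.mul_sum]
  exact mul_le_mul_of_nonneg_left (ring_sum_le hα _) (by positivity)
end
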